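/- The sequences ℓ ↦ β_{3ℓ+1} and ℓ ↦ β_{3ℓ+2} (ℓ ∈ ℕ, ℓ ≥ 1) are both strictly decreasing and both converge, as ℓ → ∞, to the base β_a ∈ (1,2] whose quasi-greedy expansion of 1 is 101(001)^∞ (β_a ≈ 1.55898). -/

import Mathlib

open Filter Set

noncomputable section

namespace FatSierpinski

/-- The digit set Ω = {(0,0),(1,0),(0,1)} ⊆ ℝ². -/
def OmegaR : Set (ℝ × ℝ) := {(0, 0), (1, 0), (0, 1)}

/-- The fat Sierpinski gasket `S_β` (sequences are 0-indexed: `d i` is the digit d_{i+1}). -/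
def Sfat (β : ℝ) : Set (ℝ × ℝ) :=
  {x | ∃ d : ℕ → ℝ × ℝ, (∀ i, d i ∈ OmegaR) ∧ x = ∑' i : ℕ, (β ^ (i + 1))⁻¹ • d i}

/-- The convex hull `Δ_β` of `S_β`. -/
def Delta (β : ℝ) : Set (ℝ × ℝ) := convexHull ℝ (Sfat β)

/-- The map `f_d(x) = (x + d)/β`. -/
def fmap (β : ℝ) (d : ℝ × ℝ) (x : ℝ × ℝ) : ℝ × ℝ := β⁻¹ • (x + d)

/-- The overlap region `O_β = ⋃_{c ≠ d ∈ Ω} f_c(Δ_β) ∩ f_d(Δ_β)`. -/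
def Ofat (β : ℝ) : Set (ℝ × ℝ) :=
  ⋃ c ∈ OmegaR, ⋃ d ∈ OmegaR, ⋃ (_ : c ≠ d), (fmap β c '' Delta β) ∩ (fmap β d '' Delta β)

/-- The univoque set of codings `𝐔_β`. -/
def Ufat (β : ℝ) : Set (ℕ → ℝ × ℝ) :=
  {d | (∀ i, d i ∈ OmegaR) ∧
    ∀ n : ℕ, (∑' i : ℕ, (β ^ (i + 1))⁻¹ • d (n + i)) ∉ Ofat β}

/-- `d` has smallest period `k`. -/
def SmallestPeriod {α : Type*} (d : ℕ → α) (k : ℕ) : Prop :=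
  0 < k ∧ (∀ i, d (i + k) = d i) ∧ ∀ j, 0 < j → j < k → ∃ i, d (i + j) ≠ d i

/-- The critical base `β_k`. -/
def betaK (k : ℕ) : ℝ :=
  sInf {β : ℝ | β ∈ Set.Ioc (1 : ℝ) 2 ∧ ∃ d ∈ Ufat β, SmallestPeriod d k}

/-- Strict lexicographic order on sequences. -/
def seqLT {α : Type*} [Preorder α] (a b : ℕ → α) : Prop :=
  ∃ n, (∀ i < n, a i = b i) ∧ a n < b n

/-- Weak lexicographic order on sequences. -/
def seqLE {α : Type*} [Preorder α] (a b : ℕ → α) : Prop :=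
  seqLT a b ∨ a = b

/-- `a` is a 0-1 sequence. -/
def IsBinary (a : ℕ → ℕ) : Prop := ∀ i, a i ≤ 1

/-- `a` does not end with `0^∞`. -/
def NotEndInZeros (a : ℕ → ℕ) : Prop := ∀ N, ∃ i, N ≤ i ∧ a i ≠ 0

/-- `∑_{i=1}^∞ a_i β^{-i} = 1` (0-indexed: `a i` is a_{i+1}). -/
def SumsToOne (β : ℝ) (a : ℕ → ℕ) : Prop :=
  ∑' i : ℕ, (a i : ℝ) / β ^ (i + 1) = 1

/-- `a` is the quasi-greedy β-expansion of 1: the lexicographically largest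
binary sequence not ending in `0^∞` whose value in base β is 1. -/
def IsQuasiGreedy (β : ℝ) (a : ℕ → ℕ) : Prop :=
  IsBinary a ∧ NotEndInZeros a ∧ SumsToOne β a ∧
    ∀ b : ℕ → ℕ, IsBinary b → NotEndInZeros b → SumsToOne β b → seqLE b a

/-- `w⁺`: replace the final digit 0 of a block by 1. -/
def plusBlock (w : List ℕ) : List ℕ := w.dropLast ++ [1]

/-- `Θ` flips the outer digits of every consecutive triple
(000↦101, 001↦100, 100↦001, 101↦000). -/
def thetaBlock (w : List ℕ) : List ℕ :=
  w.mapIdx fun i x => if i % 3 = 1 then x else 1 - x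

/-- `tB n` is the block `t_{n+1}`: `t_1 = 100`, `t_{n+1} = t_n⁺ Θ(t_n⁺)`. -/
def tB : ℕ → List ℕ
  | 0 => [1, 0, 0]
  | n + 1 => plusBlock (tB n) ++ thetaBlock (plusBlock (tB n))

/-- The sequence `u w^∞` (the block `u` followed by `w` repeated forever). -/
def prefixPeriodic (u w : List ℕ) : ℕ → ℕ := fun i =>
  if i < u.length then u.getD i 0 else w.getD ((i - u.length) % w.length) 0

/-- The periodic sequence `w^∞`. -/
def periodicSeq (w : List ℕ) : ℕ → ℕ := fun i => w.getD (i % w.length) 0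

/-- The componentwise limit `λ = 101001000101…` of the blocks `t_n`
(the digit `λ_{i+1}` has stabilized in `t_{i+2} = tB (i+1)`). -/
def lamSeq : ℕ → ℕ := fun i => (tB (i + 1)).getD i 0

/-- `β_c` is the unique base in (1,2] with `∑ λ_i β^{-i} = 1`. -/
def IsBetaC (β : ℝ) : Prop := β ∈ Set.Ioc (1 : ℝ) 2 ∧ SumsToOne β lamSeq

/-- The sequence `t_{n+2}⁺ (Θ(t_{n+2}))^∞`, the quasi-greedy expansion of 1 for `β̂_n`. -/
def hatSeq (n : ℕ) : ℕ → ℕ :=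
  prefixPeriodic (plusBlock (tB (n + 1))) (thetaBlock (tB (n + 1)))

/-- The Sharkovskii ordering `k ⊳ ℓ` on positive integers. -/
def Sharkovskii (k l : ℕ) : Prop :=
  ∃ a b c d : ℕ, k = 2 ^ a * (2 * b + 1) ∧ l = 2 ^ c * (2 * d + 1) ∧ k ≠ l ∧
    ((1 ≤ b ∧ d = 0) ∨ (1 ≤ b ∧ 1 ≤ d ∧ (a < c ∨ (a = c ∧ b < d))) ∨
      (b = 0 ∧ d = 0 ∧ c < a))

/-- The digit set Ω as pairs of naturals (for combinatorial statements). -/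
def OmegaD : Set (ℕ × ℕ) := {(0, 0), (1, 0), (0, 1)}

/-- The periodic extension `(d_1 … d_k)^∞` of a block. -/
def cyc (d : List (ℕ × ℕ)) : ℕ → ℕ × ℕ := fun i => d.getD (i % d.length) (0, 0)

/-- Strict lexicographic order on lists. -/
def listLT (u v : List ℕ) : Prop := List.Lex (· < ·) u v

/-- Weak lexicographic order on lists. -/
def listLE (u v : List ℕ) : Prop := listLT u v ∨ u = v

/-- The first components `d_1¹ … d_k¹` of a block over Ω. -/
def comp1 (d : List (ℕ × ℕ)) : List ℕ := d.map Prod.fst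

/-- The second components `d_1² … d_k²` of a block over Ω. -/
def comp2 (d : List (ℕ × ℕ)) : List ℕ := d.map Prod.snd

/-- The digits `(1 - d_1⁺) … (1 - d_k⁺)` where `d⁺ = d¹ + d²`. -/
def comp3 (d : List (ℕ × ℕ)) : List ℕ := d.map fun x => 1 - x.1 - x.2

/-- Cyclic shift of a list by `j`. -/
def rot {α : Type*} (j : ℕ) (l : List α) : List α := l.drop j ++ l.take j

/-- `d` is a representation of the binary block `a`. -/
def IsRepresentation (a : List ℕ) (d : List (ℕ × ℕ)) : Prop :=
  d.length = a.length ∧ (∀ x ∈ d, x ∈ OmegaD) ∧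
  SmallestPeriod (cyc d) a.length ∧
  comp1 d = a ∧ listLE (comp3 d) (comp2 d) ∧ listLE (comp2 d) a ∧
  ∀ j < a.length,
    listLE (comp1 (rot j d)) a ∧ listLE (comp2 (rot j d)) a ∧ listLE (comp3 (rot j d)) a

/-- A binary block is admissible if it has a representation. -/
def IsAdmissible (a : List ℕ) : Prop := ∃ d, IsRepresentation a d

/-- The `i`-th consecutive triple of a block (0-indexed). -/
def tripleAt (a : List ℕ) (i : ℕ) : List ℕ :=
  [a.getD (3 * i) 0, a.getD (3 * i + 1) 0, a.getD (3 * i + 2) 0]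

/-- The edges of the directed graph on {000, 001, 100, 101} defining the subshift `X`. -/
def XEdge (u v : List ℕ) : Prop :=
  (u, v) ∈ ({([1,0,1], [0,0,1]), ([1,0,1], [0,0,0]), ([0,0,1], [0,0,0]),
             ([0,0,0], [1,0,1]), ([0,0,0], [1,0,0]), ([1,0,0], [1,0,1])} :
      Set (List ℕ × List ℕ))

/-!
In the barycentric coordinates of the triangle `Δ_β`, membership in the univoque set becomes a
condition on each of the three letters separately: whenever a letter does not occur at a position,
the 0-1 word marking its later occurrences has value less than `1` in base `β`. Values of 0-1 words
are monotone in the partial sums of the words, because `∑ aₙ β⁻ⁿ` is a positive combination of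
these partial sums.

In a coding of smallest period `k = 3 l + r` with `r ∈ {1, 2}`, some letter occurs at least `l + 1`
times per period. By the cycle lemma, a shift of its word has partial sums at least those of the
upper mechanical word of slope `(l + 1) / k`, so this mechanical word has value less than `1`.
Conversely, three letters can be distributed so that every window of every letter is bounded by the
partial sums of that mechanical word. Hence `β_k` is the base in which the mechanical word has
value `1`. The slopes `(l + 1) / (3 l + r)` decrease strictly to `1 / 3`, and the mechanical words
decrease to `101(001)^∞`.
-/

open scoped Topology

section DigitValue

variable {β : ℝ} {a b : ℕ → ℕ}

/-- The value `∑ aᵢ β⁻ⁱ` of a digit sequence in base `β` (0-indexed, as in `SumsToOne`). -/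
def digitValue (β : ℝ) (a : ℕ → ℕ) : ℝ := ∑' i : ℕ, (a i : ℝ) / β ^ (i + 1)

lemma summable_digits (hβ : 1 < β) (ha : ∀ i, a i ≤ i + 1) :
    Summable fun i ↦ (a i : ℝ) / β ^ (i + 1) := by
  have hinv : ‖β⁻¹‖ < 1 := by
    rw [Real.norm_of_nonneg (by positivity)]
    exact inv_lt_one_of_one_lt₀ hβ
  have hlinear : Summable fun n : ℕ ↦ (n : ℝ) / β ^ n := by
    simpa only [pow_one, inv_pow, ← div_eq_mul_inv] using
      summable_pow_mul_geometric_of_norm_lt_one 1 hinv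
  refine ((summable_nat_add_iff 1).2 hlinear).of_nonneg_of_le (fun i ↦ by positivity) fun i ↦ ?_
  gcongr
  exact ha i

lemma IsBinary.summable_digits (ha : IsBinary a) (hβ : 1 < β) :
    Summable fun i ↦ (a i : ℝ) / β ^ (i + 1) :=
  FatSierpinski.summable_digits hβ fun i ↦ (ha i).trans (by lia)

lemma IsBinary.sum_range_le (ha : IsBinary a) (n : ℕ) : ∑ i ∈ Finset.range n, a i ≤ n := by
  simpa using Finset.sum_le_sum fun i (_ : i ∈ Finset.range n) ↦ ha i

lemma digitValue_nonneg (hβ : 0 ≤ β) (a : ℕ → ℕ) : 0 ≤ digitValue β a :=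
  tsum_nonneg fun _ ↦ by positivity

lemma mul_digitValue (hβ : β ≠ 0) (ha : Summable fun i ↦ (a i : ℝ) / β ^ (i + 1)) :
    β * digitValue β a = a 0 + digitValue β (fun i ↦ a (i + 1)) := by
  rw [digitValue, ha.tsum_eq_zero_add, mul_add, ← tsum_mul_left, digitValue]
  congr 1
  · rw [zero_add, pow_one, mul_div_cancel₀ _ hβ]
  · congr 1 with i
    rw [pow_succ β (i + 1)]
    field_simp

lemma mul_digitValue_tail (hβ : 1 < β) (ha : IsBinary a) (n : ℕ) :
    β * digitValue β (fun i ↦ a (n + i)) = a n + digitValue β (fun i ↦ a (n + 1 + i)) := by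
  have htail : IsBinary fun i ↦ a (n + i) := fun i ↦ ha (n + i)
  simpa only [add_zero, add_assoc, add_comm 1] using
    mul_digitValue (by positivity) (htail.summable_digits hβ)

lemma digitValue_const_one (hβ : 1 < β) : digitValue β (fun _ ↦ 1) = 1 / (β - 1) := by
  have hstep := mul_digitValue (by positivity) (IsBinary.summable_digits (fun _ ↦ le_rfl) hβ)
  rw [Nat.cast_one] at hstep
  rw [eq_div_iff (sub_pos.2 hβ).ne']
  linarith

lemma digitValue_eq_mul_sum_range (hβ : 1 < β) (ha : IsBinary a) :
    digitValue β a = (β - 1) * digitValue β (fun n ↦ ∑ i ∈ Finset.range n, a i) := by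
  have hsum : Summable fun n ↦ ((∑ i ∈ Finset.range n, a i : ℕ) : ℝ) / β ^ (n + 1) :=
    summable_digits hβ fun n ↦ (ha.sum_range_le n).trans (by lia)
  have hstep := mul_digitValue (by positivity) hsum
  have hshift : digitValue β (fun n ↦ ∑ i ∈ Finset.range (n + 1), a i) =
      digitValue β (fun n ↦ ∑ i ∈ Finset.range n, a i) + digitValue β a := by
    simp only [digitValue, Finset.sum_range_succ, Nat.cast_add, add_div]
    exact hsum.tsum_add (ha.summable_digits hβ)
  rw [hshift, Finset.sum_range_zero, Nat.cast_zero] at hstep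
  linarith

lemma digitValue_le_of_sum_range_le (hβ : 1 < β) (ha : IsBinary a) (hb : IsBinary b)
    (h : ∀ n, ∑ i ∈ Finset.range n, a i ≤ ∑ i ∈ Finset.range n, b i) :
    digitValue β a ≤ digitValue β b := by
  rw [digitValue_eq_mul_sum_range hβ ha, digitValue_eq_mul_sum_range hβ hb]
  refine mul_le_mul_of_nonneg_left ?_ (sub_pos.2 hβ).le
  refine Summable.tsum_le_tsum (fun n ↦ ?_)
    (summable_digits hβ fun n ↦ (ha.sum_range_le n).trans (by lia))
    (summable_digits hβ fun n ↦ (hb.sum_range_le n).trans (by lia))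
  gcongr
  exact h n

lemma digitValue_lt_of_sum_range_lt (hβ : 1 < β) (ha : IsBinary a) (hb : IsBinary b)
    (h : ∀ n, ∑ i ∈ Finset.range n, a i ≤ ∑ i ∈ Finset.range n, b i) (m : ℕ)
    (hm : ∑ i ∈ Finset.range m, a i < ∑ i ∈ Finset.range m, b i) :
    digitValue β a < digitValue β b := by
  rw [digitValue_eq_mul_sum_range hβ ha, digitValue_eq_mul_sum_range hβ hb]
  refine mul_lt_mul_of_pos_left ?_ (sub_pos.2 hβ)
  refine Summable.tsum_lt_tsum (i := m) (fun n ↦ ?_) ?_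
    (summable_digits hβ fun n ↦ (ha.sum_range_le n).trans (by lia))
    (summable_digits hβ fun n ↦ (hb.sum_range_le n).trans (by lia))
  · gcongr
    exact h n
  · gcongr

lemma digitValue_strictAntiOn (ha : IsBinary a) {n : ℕ} (hn : a n ≠ 0) :
    StrictAntiOn (digitValue · a) (Ioi 1) := by
  intro β hβ γ hγ hβγ
  have hβ0 : 0 < β := one_pos.trans hβ
  refine Summable.tsum_lt_tsum (i := n) (fun i ↦ ?_) ?_
    (ha.summable_digits hγ) (ha.summable_digits hβ)
  · gcongr
  · have : 0 < (a n : ℝ) := by positivity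
    gcongr

lemma digitValue_two_lt_one (ha : IsBinary a) {n : ℕ} (hn : a n = 0) : digitValue 2 a < 1 := by
  have hone : digitValue 2 (fun _ ↦ 1) = 1 := by
    rw [digitValue_const_one one_lt_two]
    norm_num
  rw [← hone]
  refine Summable.tsum_lt_tsum (i := n) (fun i ↦ ?_) ?_ (ha.summable_digits one_lt_two)
    (IsBinary.summable_digits (fun _ ↦ le_rfl) one_lt_two)
  · gcongr
    exact ha i
  · rw [hn]
    gcongr
    exact one_pos

lemma norm_digit_div_pow_le (ha : IsBinary a) (hβ : 0 < β) (i : ℕ) :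
    ‖(a i : ℝ) / β ^ (i + 1)‖ ≤ 1 / β ^ (i + 1) := by
  rw [Real.norm_of_nonneg (by positivity)]
  gcongr
  exact_mod_cast ha i

lemma summable_one_div_pow_succ (hβ : 1 < β) : Summable fun i : ℕ ↦ 1 / β ^ (i + 1) := by
  simpa using IsBinary.summable_digits (a := fun _ ↦ 1) (fun _ ↦ le_rfl) hβ

lemma continuousOn_digitValue (ha : IsBinary a) : ContinuousOn (digitValue · a) (Ioi 1) := by
  intro β hβ
  obtain ⟨r, hr, hrβ⟩ := exists_between (mem_Ioi.1 hβ)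
  have hr0 : 0 < r := one_pos.trans hr
  have hcont : ContinuousOn (digitValue · a) (Ioi r) := by
    refine continuousOn_tsum (fun i ↦ ?_) (summable_one_div_pow_succ hr) fun i x hx ↦ ?_
    · exact continuousOn_const.div (by fun_prop) fun x hx ↦ (pow_pos (hr0.trans hx) _).ne'
    · have hrx : r ≤ x := le_of_lt hx
      exact (norm_digit_div_pow_le ha (hr0.trans hx) i).trans (by gcongr)
  exact (hcont.continuousAt (Ioi_mem_nhds hrβ)).continuousWithinAt

lemma tendsto_digitValue {ι : Type*} {F : Filter ι} {u : ι → ℕ → ℕ} (hβ : 1 < β)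
    (hu : ∀ᶠ l in F, IsBinary (u l)) (h : ∀ i, ∀ᶠ l in F, u l i = a i) :
    Tendsto (fun l ↦ digitValue β (u l)) F (𝓝 (digitValue β a)) := by
  refine tendsto_tsum_of_dominated_convergence (summable_one_div_pow_succ hβ) (fun i ↦ ?_) ?_
  · refine tendsto_const_nhds.congr' ?_
    filter_upwards [h i] with l hl
    rw [hl]
  · filter_upwards [hu] with l hl i
    exact norm_digit_div_pow_le hl (one_pos.trans hβ) i

lemma exists_one_lt_digitValue (ha : IsBinary a) {m n : ℕ} (hmn : m ≠ n) (hm : a m ≠ 0)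
    (hn : a n ≠ 0) : ∃ β ∈ Ioo (1 : ℝ) 2, 1 < digitValue β a := by
  have hlim : Tendsto (fun β : ℝ ↦ 1 / β ^ (m + 1) + 1 / β ^ (n + 1)) (𝓝[>] 1) (𝓝 2) := by
    have : ContinuousAt (fun β : ℝ ↦ 1 / β ^ (m + 1) + 1 / β ^ (n + 1)) 1 := by
      fun_prop (disch := norm_num)
    convert this.tendsto.mono_left nhdsWithin_le_nhds using 2
    norm_num
  have hnear : ∀ᶠ β : ℝ in 𝓝[>] 1, β ∈ Ioo 1 2 := Ioo_mem_nhdsGT one_lt_two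
  obtain ⟨β, hβ, hlt⟩ := (hnear.and (hlim.eventually_const_lt one_lt_two)).exists
  refine ⟨β, hβ, hlt.trans_le ?_⟩
  have hβ0 : 0 < β := one_pos.trans hβ.1
  have hpair := (ha.summable_digits hβ.1).sum_le_tsum {m, n} fun i _ ↦ by positivity
  have ham : a m = 1 := le_antisymm (ha m) (Nat.pos_of_ne_zero hm)
  have han : a n = 1 := le_antisymm (ha n) (Nat.pos_of_ne_zero hn)
  simpa [Finset.sum_pair hmn, ham, han, digitValue] using hpair

lemma exists_digitValue_eq_one (ha : IsBinary a) {m n z : ℕ} (hmn : m ≠ n) (hm : a m ≠ 0)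
    (hn : a n ≠ 0) (hz : a z = 0) : ∃ β ∈ Ioo (1 : ℝ) 2, digitValue β a = 1 := by
  obtain ⟨β, hβ, hlt⟩ := exists_one_lt_digitValue ha hmn hm hn
  have hcont : ContinuousOn (digitValue · a) (Icc β 2) :=
    (continuousOn_digitValue ha).mono fun x hx ↦ hβ.1.trans_le hx.1
  obtain ⟨γ, hγ, hγa⟩ := intermediate_value_Ioo' hβ.2.le hcont ⟨digitValue_two_lt_one ha hz, hlt⟩
  exact ⟨γ, ⟨hβ.1.trans hγ.1, hγ.2⟩, hγa⟩

end DigitValue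

section Periodic

lemma sum_range_mul_of_periodic {M : Type*} [AddCommMonoid M] {f : ℕ → M} {k : ℕ}
    (hf : Function.Periodic f k) (n : ℕ) :
    ∑ i ∈ Finset.range (n * k), f i = n • ∑ i ∈ Finset.range k, f i := by
  induction n with
  | zero => simp
  | succ n ih =>
    have hshift (i : ℕ) : f (n * k + i) = f i := by
      simpa [add_comm] using hf.nat_mul n i
    simp only [add_mul, one_mul, Finset.sum_range_add, ih, hshift, add_smul, one_smul]

lemma nsmul_sum_range_of_periodic {M : Type*} [AddCommMonoid M] {f : ℕ → M} {j k : ℕ}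
    (hj : Function.Periodic f j) (hk : Function.Periodic f k) :
    j • ∑ i ∈ Finset.range k, f i = k • ∑ i ∈ Finset.range j, f i := by
  rw [← sum_range_mul_of_periodic hk, ← sum_range_mul_of_periodic hj, mul_comm]

-- The cycle lemma: start where the discrepancy `k ∑_{i<n} fᵢ - n ∑_{i<k} fᵢ` is minimal.
lemma exists_forall_nsmul_sum_le_of_periodic {G : Type*} [AddCommGroup G] [LinearOrder G]
    [IsOrderedAddMonoid G] {f : ℕ → G} {k : ℕ} (hk : 0 < k) (hf : Function.Periodic f k) :
    ∃ n, ∀ m, m • ∑ i ∈ Finset.range k, f i ≤ k • ∑ i ∈ Finset.range m, f (n + i) := by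
  set S : ℕ → G := fun n ↦ ∑ i ∈ Finset.range n, f i with hS
  have hSper (n : ℕ) : S (n + k) = S n + S k := by
    have hshift (i : ℕ) : f (k + i) = f i := by rw [add_comm, hf]
    simp only [hS, add_comm n k, Finset.sum_range_add, hshift]
    exact add_comm _ _
  set discrepancy : ℕ → G := fun n ↦ k • S n - n • S k with hdisc
  have hper : Function.Periodic discrepancy k := fun n ↦ by
    simp only [hdisc, hSper, add_smul, smul_add]
    abel
  obtain ⟨n, -, hmin⟩ := Finset.exists_min_image (Finset.range k) discrepancy ⟨0, by simpa⟩
  refine ⟨n, fun m ↦ ?_⟩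
  have hle : discrepancy n ≤ discrepancy (n + m) := by
    rw [← hper.map_mod_nat (n + m)]
    exact hmin _ (Finset.mem_range.2 (Nat.mod_lt _ hk))
  have hsplit : S (n + m) = S n + ∑ i ∈ Finset.range m, f (n + i) := Finset.sum_range_add _ _ _
  rw [← sub_nonneg] at hle ⊢
  convert hle using 1
  simp only [hdisc, hsplit, add_smul, smul_add]
  abel

lemma smallestPeriod_comp_iff {α γ : Type*} {g : α → γ} (hg : Function.Injective g)
    {x : ℕ → α} {k : ℕ} : SmallestPeriod (g ∘ x) k ↔ SmallestPeriod x k := by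
  simp [SmallestPeriod, hg.eq_iff, hg.ne_iff]

lemma smallestPeriod_of_coprime_sum {α : Type*} {x : ℕ → α} {k : ℕ} (hk : 0 < k)
    (hx : Function.Periodic x k) (g : α → ℕ)
    (hcop : k.Coprime (∑ i ∈ Finset.range k, g (x i))) : SmallestPeriod x k := by
  refine ⟨hk, hx, fun j hj hjk ↦ ?_⟩
  by_contra! hper
  have hsum := nsmul_sum_range_of_periodic (Function.Periodic.comp (f := x) hper g) (hx.comp g)
  have hdvd : k ∣ j := hcop.dvd_of_dvd_mul_right ⟨_, hsum⟩
  exact (Nat.le_of_dvd hj hdvd).not_gt hjk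

end Periodic

section Mechanical

variable {p q p' q' : ℕ}

/-- The number `⌈n p / q⌉` of ones among the first `n` digits of the upper mechanical word of
slope `p / q`. -/
def mechCount (p q n : ℕ) : ℕ := (n * p) ⌈/⌉ q

/-- The upper mechanical word of slope `p / q`, with digits `⌈(n + 1) p / q⌉ - ⌈n p / q⌉`; it is
binary for `p ≤ q`. -/
def mechWord (p q n : ℕ) : ℕ := mechCount p q (n + 1) - mechCount p q n

lemma mechCount_le_iff (hq : 0 < q) {n c : ℕ} : mechCount p q n ≤ c ↔ n * p ≤ q * c :=
  ceilDiv_le_iff_le_mul hq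

lemma le_mul_mechCount (hq : 0 < q) (n : ℕ) : n * p ≤ q * mechCount p q n :=
  (mechCount_le_iff hq).1 le_rfl

lemma mechCount_zero (hq : 0 < q) : mechCount p q 0 = 0 :=
  Nat.le_zero.1 ((mechCount_le_iff hq).2 (by simp))

lemma mechCount_mul (hq : 0 < q) (n : ℕ) : mechCount p q (q * n) = n * p := by
  rw [mechCount, mul_assoc, ← smul_eq_mul, smul_ceilDiv hq]

lemma mechCount_add_le (hq : 0 < q) (m n : ℕ) :
    mechCount p q (m + n) ≤ mechCount p q m + mechCount p q n := by
  rw [mechCount_le_iff hq, add_mul, mul_add]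
  exact add_le_add (le_mul_mechCount hq m) (le_mul_mechCount hq n)

lemma mechCount_mono (hq : 0 < q) : Monotone (mechCount p q) := fun _ n hmn ↦
  (mechCount_le_iff hq).2 ((Nat.mul_le_mul_right p hmn).trans (le_mul_mechCount hq n))

lemma mechCount_add_self (hq : 0 < q) (n : ℕ) :
    mechCount p q (n + q) = mechCount p q n + p := by
  refine eq_of_forall_ge_iff fun c ↦ ?_
  rw [mechCount_le_iff hq, add_mul]
  constructor
  · intro h
    obtain ⟨d, rfl⟩ : ∃ d, c = d + p := Nat.exists_eq_add_of_le' <|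
      Nat.le_of_mul_le_mul_left ((Nat.le_add_left _ _).trans h) hq
    rw [mul_add] at h
    exact Nat.add_le_add_right ((mechCount_le_iff hq).2 (Nat.le_of_add_le_add_right h)) p
  · intro h
    calc n * p + q * p ≤ q * mechCount p q n + q * p :=
          Nat.add_le_add_right (le_mul_mechCount hq n) _
      _ = q * (mechCount p q n + p) := (mul_add _ _ _).symm
      _ ≤ q * c := Nat.mul_le_mul_left q h

lemma mechCount_le_one (hq : 0 < q) {n : ℕ} (h : n * p ≤ q) : mechCount p q n ≤ 1 :=
  (mechCount_le_iff hq).2 (by rwa [mul_one])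

lemma mechCount_add_le_add_one (hq : 0 < q) {m : ℕ} (h : m * p ≤ q) (n : ℕ) :
    mechCount p q (n + m) ≤ mechCount p q n + 1 :=
  (mechCount_add_le hq n m).trans (Nat.add_le_add_left (mechCount_le_one hq h) _)

lemma mechCount_le_self (hq : 0 < q) (hpq : p ≤ q) (n : ℕ) : mechCount p q n ≤ n :=
  (mechCount_le_iff hq).2 (by rw [mul_comm]; exact Nat.mul_le_mul_right n hpq)

lemma mechCount_le_mechCount (hq : 0 < q) (hq' : 0 < q') (h : p * q' ≤ p' * q) (n : ℕ) :
    mechCount p q n ≤ mechCount p' q' n := by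
  rw [mechCount_le_iff hq]
  refine Nat.le_of_mul_le_mul_left ?_ hq'
  calc q' * (n * p) = n * (p * q') := by ring
    _ ≤ n * (p' * q) := by gcongr
    _ = q * (n * p') := by ring
    _ ≤ q * (q' * mechCount p' q' n) := Nat.mul_le_mul_left q (le_mul_mechCount hq' n)
    _ = q' * (q * mechCount p' q' n) := by ring

lemma mechCount_add_one_le (hq : 0 < q) {m : ℕ} (h : q ≤ m * p) (n : ℕ) :
    mechCount p q n + 1 ≤ mechCount p q (n + m) := by
  obtain ⟨c, hc⟩ : ∃ c, mechCount p q (n + m) = c + 1 := by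
    refine Nat.exists_eq_succ_of_ne_zero fun hzero ↦ ?_
    have hle := le_mul_mechCount (p := p) hq (n + m)
    rw [hzero, mul_zero, add_mul] at hle
    lia
  have hle := le_mul_mechCount (p := p) hq (n + m)
  rw [hc, add_mul, mul_add_one] at hle
  rw [hc, add_le_add_iff_right, mechCount_le_iff hq]
  lia

lemma add_le_add_mechCount_one (hq : 0 < q) {F : ℕ → ℕ} (hF : Monotone F)
    (h : ∀ n, F (n + q) ≤ F n + 1) (n m : ℕ) : F (n + m) ≤ F n + mechCount 1 q m := by
  have hblocks (c : ℕ) : F (n + q * c) ≤ F n + c := by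
    induction c with
    | zero => simp
    | succ c ih =>
      rw [mul_add_one, ← add_assoc]
      exact (h _).trans (Nat.add_le_add_right ih 1)
  refine (hF (Nat.add_le_add_left ?_ n)).trans (hblocks _)
  simpa using le_mul_mechCount (p := 1) hq m

lemma add_le_add_mechCount_of_slope_ge {d : ℕ} (hd : 0 < d) (hq : 0 < q) (hslope : q ≤ d * p)
    {F : ℕ → ℕ} (hF : Monotone F) (h : ∀ n, F (n + d) ≤ F n + 1) (n m : ℕ) :
    F (n + m) ≤ F n + mechCount p q m :=
  (add_le_add_mechCount_one hd hF h n m).trans <| Nat.add_le_add_left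
    (mechCount_le_mechCount hd hq (by rwa [one_mul, mul_comm]) m) _

lemma div_lt_mechCount (hq : 0 < q) {d m : ℕ} (hm : 0 < m) (h : q < d * p) :
    m / d < mechCount p q m := by
  refine lt_of_not_ge fun hle ↦ ?_
  have hqm : m * p ≤ q * (m / d) := (mechCount_le_iff hq).1 hle
  refine lt_irrefl (m * (d * p)) ?_
  calc m * (d * p) = d * (m * p) := by ring
    _ ≤ d * (q * (m / d)) := Nat.mul_le_mul_left d hqm
    _ = q * (m / d * d) := by ring
    _ ≤ q * m := Nat.mul_le_mul_left q (Nat.div_mul_le_self m d)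
    _ = m * q := mul_comm _ _
    _ < m * (d * p) := Nat.mul_lt_mul_of_pos_left h hm

lemma mechCount_eq_div_add_one (hq : 0 < q) {d m : ℕ} (hm : 0 < m) (hlow : q < d * p)
    (hup : m * (d * p) ≤ (m + 1) * q) : mechCount p q m = m / d + 1 := by
  have hd : 0 < d := Nat.pos_of_mul_pos_right (Nat.zero_lt_of_lt hlow)
  refine le_antisymm ((mechCount_le_iff hq).2 ?_) (div_lt_mechCount hq hm hlow)
  refine Nat.le_of_mul_le_mul_left ?_ hd
  calc d * (m * p) = m * (d * p) := by ring
    _ ≤ (m + 1) * q := hup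
    _ ≤ d * (m / d + 1) * q := Nat.mul_le_mul_right q (Nat.lt_mul_div_succ m hd)
    _ = d * (q * (m / d + 1)) := by ring

lemma isBinary_mechWord (hq : 0 < q) (hpq : p ≤ q) : IsBinary (mechWord p q) := fun n ↦ by
  have hadd := mechCount_add_le (p := p) hq n 1
  have hone := mechCount_le_one (p := p) (n := 1) hq (by lia)
  unfold mechWord
  lia

lemma sum_range_mechWord (hq : 0 < q) (m : ℕ) :
    ∑ i ∈ Finset.range m, mechWord p q i = mechCount p q m := by
  simp only [mechWord, Finset.sum_range_tsub (mechCount_mono hq), mechCount_zero hq, tsub_zero]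

lemma mechWord_zero_ne_zero (hq : 0 < q) (hp : 0 < p) : mechWord p q 0 ≠ 0 := by
  have hpos := div_lt_mechCount (p := p) (d := q + 1) hq one_pos (by nlinarith)
  rw [mechWord, mechCount_zero hq, zero_add]
  lia

lemma mechWord_self (hq : 0 < q) : mechWord p q q = mechWord p q 0 := by
  have h1 := mechCount_add_self (p := p) hq 1
  have h0 := mechCount_add_self (p := p) hq 0
  unfold mechWord
  rw [zero_add] at h0 ⊢
  rw [add_comm q, h1, h0, Nat.add_sub_add_right]

lemma mechWord_pred (hpq : p < q) : mechWord p q (q - 1) = 0 := by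
  have hq : 0 < q := Nat.zero_lt_of_lt hpq
  have hfull : mechCount p q q = p := by simpa using mechCount_mul (p := p) hq 1
  rw [mechWord, Nat.sub_add_cancel hq, hfull, Nat.sub_eq_zero_iff_le]
  refine le_of_not_gt fun hlt ↦ ?_
  have hle := (mechCount_le_iff hq).1 (Nat.le_pred_of_lt hlt)
  obtain ⟨m, rfl⟩ := Nat.exists_eq_add_one.2 hq
  obtain ⟨c, rfl⟩ := Nat.exists_eq_add_one.2 (Nat.zero_lt_of_lt hlt)
  rw [Nat.add_sub_cancel, Nat.pred_succ] at hle
  nlinarith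

lemma exists_digitValue_mechWord_eq_one (hp : 0 < p) (hpq : p < q) :
    ∃ β ∈ Ioo (1 : ℝ) 2, digitValue β (mechWord p q) = 1 := by
  have hq := hp.trans hpq
  have hne := mechWord_zero_ne_zero hq hp
  exact exists_digitValue_eq_one (isBinary_mechWord hq hpq.le) hq.ne hne
    (by rwa [mechWord_self hq]) (mechWord_pred hpq)

lemma digitValue_mechWord_lt {β : ℝ} (hβ : 1 < β) (hq : 0 < q) (hq' : 0 < q') (hpq : p ≤ q)
    (hpq' : p' ≤ q') (h : p * q' < p' * q) :
    digitValue β (mechWord p q) < digitValue β (mechWord p' q') := by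
  refine digitValue_lt_of_sum_range_lt hβ (isBinary_mechWord hq hpq) (isBinary_mechWord hq' hpq')
    (fun n ↦ ?_) (q * q') ?_
  · simpa only [sum_range_mechWord hq, sum_range_mechWord hq'] using
      mechCount_le_mechCount hq hq' h.le n
  · rw [sum_range_mechWord hq, sum_range_mechWord hq', mechCount_mul hq, mul_comm q,
      mechCount_mul hq']
    lia

end Mechanical

section LimitWord

/-- The sequence `101(001)^∞`, the limit of the mechanical words whose slopes decrease to `1/3`. -/
def limitWord : ℕ → ℕ := prefixPeriodic [1, 0, 1] [0, 0, 1]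

lemma limitWord_apply (i : ℕ) : limitWord i = if i = 0 ∨ i % 3 = 2 then 1 else 0 := by
  rcases lt_or_ge i 3 with hi | hi
  · interval_cases i <;> rfl
  · obtain ⟨i, rfl⟩ := Nat.exists_eq_add_of_le' hi
    have hmod : i % 3 < 3 := Nat.mod_lt _ (by norm_num)
    simp only [limitWord, prefixPeriodic, List.length_cons, List.length_nil, zero_add,
      Nat.reduceAdd, not_lt.2 (Nat.le_add_left 3 i), if_false, Nat.add_sub_cancel,
      Nat.add_mod_right]
    interval_cases i % 3 <;> simp

lemma isBinary_limitWord : IsBinary limitWord := fun i ↦ by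
  rw [limitWord_apply]
  split <;> lia

lemma sum_range_limitWord (m : ℕ) :
    ∑ i ∈ Finset.range m, limitWord i = if m = 0 then 0 else m / 3 + 1 := by
  induction m with
  | zero => simp
  | succ m ih =>
    rw [Finset.sum_range_succ, ih, limitWord_apply]
    split_ifs <;> lia

lemma digitValue_limitWord_le {β : ℝ} (hβ : 1 < β) {p q : ℕ} (hpq : p ≤ q) (h : q < 3 * p) :
    digitValue β limitWord ≤ digitValue β (mechWord p q) := by
  have hq : 0 < q := by lia
  refine digitValue_le_of_sum_range_le hβ isBinary_limitWord (isBinary_mechWord hq hpq) fun n ↦ ?_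
  rw [sum_range_limitWord, sum_range_mechWord hq]
  split_ifs with hn
  · exact zero_le
  · exact div_lt_mechCount hq (Nat.pos_of_ne_zero hn) h

lemma eventually_mechWord_eq_limitWord {r : ℕ} (hr : r ∈ Icc 1 2) (i : ℕ) :
    ∀ᶠ l in atTop, mechWord (l + 1) (3 * l + r) i = limitWord i := by
  obtain ⟨hr1, hr2⟩ := hr
  filter_upwards [eventually_ge_atTop (i + 1)] with l hl
  have hcount {m : ℕ} (hm : m ≤ i + 1) : mechCount (l + 1) (3 * l + r) m =
      ∑ n ∈ Finset.range m, limitWord n := by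
    rw [sum_range_limitWord]
    split_ifs with hm0
    · rw [hm0, mechCount_zero (by lia)]
    · exact mechCount_eq_div_add_one (by lia) (Nat.pos_of_ne_zero hm0) (by lia) (by nlinarith)
  rw [mechWord, hcount le_rfl, hcount i.le_succ, Finset.sum_range_succ, Nat.add_sub_cancel_left]

end LimitWord

section Coding

variable {β : ℝ} {x : ℕ → Fin 3}

/-- The three digits of `Ω`, indexed by the barycentric coordinate that they increase. -/
def vertex : Fin 3 → ℝ × ℝ := ![(1, 0), (0, 1), (0, 0)]

/-- The barycentric coordinates on the triangle `Δ_β`, normalized to have sum `1 / (β - 1)`. -/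
def bary (β : ℝ) (p : ℝ × ℝ) : Fin 3 → ℝ := ![p.1, p.2, 1 / (β - 1) - p.1 - p.2]

/-- The 0-1 sequence marking the occurrences of the letter `j` in `x`. -/
def letterIndicator (x : ℕ → Fin 3) (j : Fin 3) (i : ℕ) : ℕ := if x i = j then 1 else 0

lemma range_vertex : range vertex = OmegaR := by
  ext d
  simp only [vertex, Matrix.range_cons, Matrix.range_empty, union_empty, union_singleton,
    union_insert, mem_insert_iff, mem_singleton_iff, OmegaR]
  tauto

lemma vertex_injective : Function.Injective vertex := by
  intro i j h
  fin_cases i <;> fin_cases j <;> simp_all [vertex]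

lemma vertex_mem_OmegaR (j : Fin 3) : vertex j ∈ OmegaR := range_vertex ▸ mem_range_self j

lemma exists_eq_vertex_comp {d : ℕ → ℝ × ℝ} (hd : ∀ i, d i ∈ OmegaR) :
    ∃ x : ℕ → Fin 3, vertex ∘ x = d := by
  choose x hx using fun i ↦ range_vertex.symm ▸ hd i
  exact ⟨x, funext hx⟩

lemma isBinary_letterIndicator (x : ℕ → Fin 3) (j : Fin 3) : IsBinary (letterIndicator x j) :=
  fun i ↦ by unfold letterIndicator; split <;> lia

lemma sum_letterIndicator (x : ℕ → Fin 3) (i : ℕ) : ∑ j, letterIndicator x j i = 1 := by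
  simp [letterIndicator]

lemma sum_digitValue_letterIndicator (hβ : 1 < β) (x : ℕ → Fin 3) :
    ∑ j, digitValue β (letterIndicator x j) = 1 / (β - 1) := by
  rw [← digitValue_const_one hβ]
  simp only [digitValue]
  rw [← Summable.tsum_finsetSum fun j _ ↦ (isBinary_letterIndicator x j).summable_digits hβ]
  simp only [← Finset.sum_div, ← Nat.cast_sum, sum_letterIndicator]

lemma bary_tsum (hβ : 1 < β) (x : ℕ → Fin 3) (j : Fin 3) :
    bary β (∑' i : ℕ, (β ^ (i + 1))⁻¹ • vertex (x i)) j = digitValue β (letterIndicator x j) := by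
  have hcoord (i : ℕ) : (β ^ (i + 1))⁻¹ • vertex (x i) =
      ((letterIndicator x 0 i : ℝ) / β ^ (i + 1), (letterIndicator x 1 i : ℝ) / β ^ (i + 1)) := by
    generalize hj : x i = j
    fin_cases j <;> simp [vertex, letterIndicator, hj]
  have hpair : ∑' i : ℕ, (β ^ (i + 1))⁻¹ • vertex (x i) =
      (digitValue β (letterIndicator x 0), digitValue β (letterIndicator x 1)) := by
    simp only [hcoord]
    exact (((isBinary_letterIndicator x 0).summable_digits hβ).hasSum.prodMk
      ((isBinary_letterIndicator x 1).summable_digits hβ).hasSum).tsum_eq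
  have hsum := sum_digitValue_letterIndicator hβ x
  rw [Fin.sum_univ_three] at hsum
  rw [hpair]
  fin_cases j
  · rfl
  · rfl
  · change 1 / (β - 1) - digitValue β (letterIndicator x 0) - digitValue β (letterIndicator x 1) =
      digitValue β (letterIndicator x 2)
    linarith

lemma convex_forall_bary_nonneg (β : ℝ) : Convex ℝ {p : ℝ × ℝ | ∀ j, 0 ≤ bary β p j} := by
  intro p hp q hq s t hs ht hst j
  have haffine : bary β (s • p + t • q) j = s * bary β p j + t * bary β q j := by
    obtain rfl : t = 1 - s := by linarith
    fin_cases j <;> simp [bary]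
    ring
  rw [haffine]
  exact add_nonneg (mul_nonneg hs (hp j)) (mul_nonneg ht (hq j))

lemma sum_bary (β : ℝ) (p : ℝ × ℝ) : ∑ j, bary β p j = 1 / (β - 1) := by
  simp [Fin.sum_univ_three, bary]

lemma sum_bary_smul_vertex (β : ℝ) (p : ℝ × ℝ) : ∑ j, bary β p j • vertex j = p := by
  ext <;> simp [Fin.sum_univ_three, bary, vertex]

lemma smul_vertex_mem_Delta (hβ : 1 < β) (j : Fin 3) : (1 / (β - 1)) • vertex j ∈ Delta β := by
  refine subset_convexHull ℝ _ ⟨fun _ ↦ vertex j, fun _ ↦ vertex_mem_OmegaR j, ?_⟩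
  rw [← digitValue_const_one hβ, digitValue, ← Summable.tsum_smul_const]
  · simp [div_eq_mul_inv]
  · simpa using summable_one_div_pow_succ hβ

lemma mem_Delta_iff (hβ : 1 < β) {p : ℝ × ℝ} : p ∈ Delta β ↔ ∀ j, 0 ≤ bary β p j := by
  have hβ' : 0 < β - 1 := sub_pos.2 hβ
  constructor
  · intro hp
    refine convexHull_min ?_ (convex_forall_bary_nonneg β) hp
    rintro _ ⟨d, hd, rfl⟩ j
    obtain ⟨x, rfl⟩ := exists_eq_vertex_comp hd
    exact (digitValue_nonneg (by positivity) _).trans_eq (bary_tsum hβ x j).symm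
  · intro hp
    have hmem : ∑ j, ((β - 1) * bary β p j) • (1 / (β - 1)) • vertex j ∈ Delta β := by
      refine (convex_convexHull ℝ _).sum_mem (fun j _ ↦ mul_nonneg hβ'.le (hp j)) ?_
        fun j _ ↦ smul_vertex_mem_Delta hβ j
      rw [← Finset.mul_sum, sum_bary, mul_one_div_cancel hβ'.ne']
    have hscale (j : Fin 3) :
        ((β - 1) * bary β p j) • (1 / (β - 1)) • vertex j = bary β p j • vertex j := by
      rw [smul_smul]
      congr 1
      field_simp
    simpa only [hscale, sum_bary_smul_vertex] using hmem

lemma mem_fmap_image_iff (hβ : β ≠ 0) {c p : ℝ × ℝ} {s : Set (ℝ × ℝ)} :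
    p ∈ fmap β c '' s ↔ β • p - c ∈ s := by
  constructor
  · rintro ⟨q, hq, rfl⟩
    simpa only [fmap, smul_inv_smul₀ hβ, add_sub_cancel_right] using hq
  · intro h
    exact ⟨_, h, by simp only [fmap, sub_add_cancel, inv_smul_smul₀ hβ]⟩

lemma bary_smul_sub_vertex (hβ : 1 < β) (p : ℝ × ℝ) (c j : Fin 3) :
    bary β (β • p - vertex c) j = β * bary β p j - if c = j then 1 else 0 := by
  have hβ' : β - 1 ≠ 0 := (sub_pos.2 hβ).ne'
  have hR : β * (β - 1)⁻¹ = (β - 1)⁻¹ + 1 := by field_simp; ring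
  fin_cases c <;> fin_cases j <;> simp [bary, vertex, mul_sub] <;> linarith

lemma mem_Ofat_iff (hβ : 1 < β) {p : ℝ × ℝ} : p ∈ Ofat β ↔ (∀ j, 0 ≤ bary β p j) ∧
    ∃ c e, c ≠ e ∧ 1 ≤ β * bary β p c ∧ 1 ≤ β * bary β p e := by
  have hβ0 : 0 < β := one_pos.trans hβ
  have hpiece (c : Fin 3) : p ∈ fmap β (vertex c) '' Delta β ↔
      (∀ j, 0 ≤ bary β p j) ∧ 1 ≤ β * bary β p c := by
    simp only [mem_fmap_image_iff hβ0.ne', mem_Delta_iff hβ, bary_smul_sub_vertex hβ, sub_nonneg]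
    constructor
    · refine fun h ↦ ⟨fun j ↦ nonneg_of_mul_nonneg_right ((?_ : (0 : ℝ) ≤ _).trans (h j)) hβ0,
        by simpa using h c⟩
      split <;> norm_num
    · rintro ⟨h, hc⟩ j
      split_ifs with hcj
      · rwa [← hcj]
      · exact mul_nonneg hβ0.le (h j)
  simp only [Ofat, ← range_vertex, mem_iUnion, exists_prop, mem_range, exists_exists_eq_and,
    mem_inter_iff, hpiece, vertex_injective.ne_iff]
  tauto

lemma vertex_comp_mem_Ufat_iff (hβ : 1 < β) : vertex ∘ x ∈ Ufat β ↔
    ∀ n j, x n ≠ j → digitValue β (fun i ↦ letterIndicator x j (n + 1 + i)) < 1 := by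
  have hβ0 : 0 < β := one_pos.trans hβ
  have hmem : ∀ i, (vertex ∘ x) i ∈ OmegaR := fun i ↦ vertex_mem_OmegaR (x i)
  have hbary (n : ℕ) (j : Fin 3) :
      bary β (∑' i : ℕ, (β ^ (i + 1))⁻¹ • (vertex ∘ x) (n + i)) j =
        digitValue β fun i ↦ letterIndicator x j (n + i) :=
    bary_tsum hβ (fun i ↦ x (n + i)) j
  simp only [Ufat, Set.mem_ofPred_eq, hmem, implies_true, true_and, mem_Ofat_iff hβ, hbary,
    mul_digitValue_tail hβ (isBinary_letterIndicator x _), digitValue_nonneg hβ0.le, not_exists,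
    forall_const, not_and, not_le]
  refine forall_congr' fun n ↦ ⟨fun h j hj ↦ ?_, fun h c e hce hc ↦ ?_⟩
  · simpa [letterIndicator, hj] using h (x n) j hj (by
      simpa [letterIndicator] using digitValue_nonneg hβ0.le _)
  · have hlt {j : Fin 3} (hj : x n ≠ j) : (letterIndicator x j n : ℝ) +
        digitValue β (fun i ↦ letterIndicator x j (n + 1 + i)) < 1 := by
      simpa [letterIndicator, hj] using h j hj
    refine hlt fun he ↦ (hlt fun hxc ↦ hce (hxc.symm.trans he)).not_ge hc

end Coding

section LowerBound

variable {β : ℝ}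

lemma digitValue_tail_lt_one (hβ : β ∈ Ioc 1 2) {a : ℕ → ℕ} (ha : IsBinary a)
    (htail : ∀ n, a n = 0 → digitValue β (fun i ↦ a (n + 1 + i)) < 1) {z n : ℕ} (hz : a z = 0)
    (hzn : z < n) : digitValue β (fun i ↦ a (n + i)) < 1 := by
  induction n, hzn using Nat.le_induction with
  | base => exact htail z hz
  | succ n _ ih =>
    rcases Nat.le_one_iff_eq_zero_or_eq_one.1 (ha n) with hn | hn
    · exact htail n hn
    · have hstep := mul_digitValue_tail hβ.1 ha n
      rw [hn, Nat.cast_one] at hstep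
      nlinarith [hβ.1, hβ.2]

lemma digitValue_mechWord_lt_one_of_periodic (hβ : β ∈ Ioc 1 2) {a : ℕ → ℕ} (ha : IsBinary a)
    {k : ℕ} (hk : 0 < k) (hper : Function.Periodic a k)
    (htail : ∀ n, a n = 0 → digitValue β (fun i ↦ a (n + 1 + i)) < 1) {z : ℕ} (hz : a z = 0)
    {p : ℕ} (hp : p ≤ ∑ i ∈ Finset.range k, a i) : digitValue β (mechWord p k) < 1 := by
  obtain ⟨n, hn⟩ := exists_forall_nsmul_sum_le_of_periodic hk (hper.comp ((↑) : ℕ → ℤ))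
  have hshift : (fun i ↦ a (n + i)) = fun i ↦ a (n + (z + 1) * k + i) := by
    ext i
    rw [add_right_comm]
    exact (hper.nat_mul (z + 1) (n + i)).symm
  have hlt : digitValue β (fun i ↦ a (n + i)) < 1 := by
    rw [hshift]
    exact digitValue_tail_lt_one hβ ha htail hz (by nlinarith)
  refine (digitValue_le_of_sum_range_le hβ.1 (isBinary_mechWord hk (hp.trans (ha.sum_range_le k)))
    (fun i ↦ ha (n + i)) fun m ↦ ?_).trans_lt hlt
  rw [sum_range_mechWord hk, mechCount_le_iff hk]
  have hcount : m * ∑ i ∈ Finset.range k, a i ≤ k * ∑ i ∈ Finset.range m, a (n + i) := by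
    have hm := hn m
    simp only [Function.comp_apply, nsmul_eq_mul] at hm
    exact_mod_cast hm
  exact (Nat.mul_le_mul_left m hp).trans hcount

lemma exists_lt_sum_letterIndicator (x : ℕ → Fin 3) {l k : ℕ} (h : 3 * l < k) :
    ∃ j, l < ∑ i ∈ Finset.range k, letterIndicator x j i := by
  have htotal : ∑ j, ∑ i ∈ Finset.range k, letterIndicator x j i = k := by
    rw [Finset.sum_comm]
    simp only [sum_letterIndicator, Finset.sum_const, Finset.card_range, smul_eq_mul, mul_one]
  obtain ⟨j, -, hj⟩ := Finset.exists_lt_of_sum_lt (s := Finset.univ) (f := fun _ : Fin 3 ↦ l)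
    (g := fun j ↦ ∑ i ∈ Finset.range k, letterIndicator x j i) (by rw [htotal]; simpa)
  exact ⟨j, hj⟩

lemma digitValue_mechWord_lt_one_of_mem_Ufat (hβ : β ∈ Ioc 1 2) {d : ℕ → ℝ × ℝ}
    (hd : d ∈ Ufat β) {k l : ℕ} (hk : 1 < k) (hper : SmallestPeriod d k) (h : 3 * l < k) :
    digitValue β (mechWord (l + 1) k) < 1 := by
  obtain ⟨x, rfl⟩ := exists_eq_vertex_comp hd.1
  rw [smallestPeriod_comp_iff vertex_injective] at hper
  obtain ⟨hk0, hxper, hmin⟩ := hper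
  obtain ⟨j, hj⟩ := exists_lt_sum_letterIndicator x h
  obtain ⟨z, hz⟩ : ∃ z, x z ≠ j := by
    by_contra! hconst
    obtain ⟨i, hi⟩ := hmin 1 one_pos hk
    exact hi ((hconst _).trans (hconst _).symm)
  refine digitValue_mechWord_lt_one_of_periodic hβ (isBinary_letterIndicator x j) hk0
    (fun i ↦ by simp only [letterIndicator, hxper]) (fun n hn ↦ ?_) (z := z) (if_neg hz) hj
  exact (vertex_comp_mem_Ufat_iff hβ.1).1 hd n j (by simpa [letterIndicator] using hn)

end LowerBound

section UpperBound

lemma vertex_comp_mem_Ufat_of_sum_range_le {β : ℝ} (hβ : 1 < β) {b : ℕ → ℕ} (hb : IsBinary b)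
    (hlt : digitValue β b < 1) {x : ℕ → Fin 3}
    (h : ∀ j n m, ∑ i ∈ Finset.range m, letterIndicator x j (n + i) ≤ ∑ i ∈ Finset.range m, b i) :
    vertex ∘ x ∈ Ufat β :=
  (vertex_comp_mem_Ufat_iff hβ).2 fun n j _ ↦ (digitValue_le_of_sum_range_le hβ
    (fun _ ↦ isBinary_letterIndicator x j _) hb (h j (n + 1))).trans_lt hlt

variable {C : Fin 3 → ℕ → ℕ}

lemma exists_coding_of_counts (hmono : ∀ j, Monotone (C j)) (hsum : ∀ i, ∑ j, C j i = i) :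
    ∃ x : ℕ → Fin 3, ∀ j n, C j (n + 1) = C j n + letterIndicator x j n := by
  have hletter (n : ℕ) : ∃ c, ∀ j, C j (n + 1) = C j n + if c = j then 1 else 0 := by
    have hn := hsum n
    have hn' := hsum (n + 1)
    have hle (j : Fin 3) : C j n ≤ C j (n + 1) := hmono j n.le_succ
    have h0 := hle 0
    have h1 := hle 1
    have h2 := hle 2
    rw [Fin.sum_univ_three] at hn hn'
    simp only [Fin.forall_fin_succ, Fin.isValue, Fin.succ_zero_eq_one, Fin.succ_one_eq_two,
      IsEmpty.forall_iff, and_true, Fin.exists_fin_succ, ↓reduceIte, zero_ne_one, add_zero,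
      Fin.reduceEq, Fin.succ_ne_zero, exists_and_left, IsEmpty.exists_iff, or_false]
    lia
  choose x hx using hletter
  exact ⟨x, fun j n ↦ hx n j⟩

lemma exists_smallestPeriod_coding_of_counts {k : ℕ} (hk : 0 < k) {b : ℕ → ℕ} {M : Fin 3 → ℕ}
    {c : Fin 3} (hmono : ∀ j, Monotone (C j)) (hsum : ∀ i, ∑ j, C j i = i)
    (hper : ∀ j n, C j (n + k) = C j n + M j) (hcop : k.Coprime (M c))
    (hwindow : ∀ j n m, C j (n + m) ≤ C j n + b m) :
    ∃ x : ℕ → Fin 3, SmallestPeriod x k ∧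
      ∀ j n m, ∑ i ∈ Finset.range m, letterIndicator x j (n + i) ≤ b m := by
  obtain ⟨x, hx⟩ := exists_coding_of_counts hmono hsum
  have hcount (j : Fin 3) (n m : ℕ) :
      C j (n + m) = C j n + ∑ i ∈ Finset.range m, letterIndicator x j (n + i) := by
    induction m with
    | zero => simp
    | succ m ih => rw [← add_assoc, hx, ih, Finset.sum_range_succ, add_assoc]
  refine ⟨x, smallestPeriod_of_coprime_sum hk (fun n ↦ ?_) (fun y ↦ if y = c then 1 else 0) ?_,
    fun j n m ↦ ?_⟩
  · have hind : letterIndicator x (x n) (n + k) = letterIndicator x (x n) n := by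
      have hn := hper (x n) (n + 1)
      rw [add_right_comm, hx, hx, hper] at hn
      lia
    simpa [letterIndicator] using hind
  · have hperiod := (hcount c 0 k).symm.trans (hper c 0)
    simp only [zero_add, add_right_inj] at hperiod
    rwa [← hperiod] at hcop
  · have := hwindow j n m
    rw [hcount] at this
    lia

lemma forall_fin_three {P : Fin 3 → Prop} : (∀ j, P j) ↔ P 0 ∧ P 1 ∧ P 2 := by
  simp [Fin.forall_fin_succ]

lemma monotone_sub_add_div_two {X : ℕ → ℕ} (hX : ∀ n, X (n + 1) ≤ X n + 1) (c : ℕ) :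
    Monotone fun n ↦ (n - X n + c) / 2 := by
  refine monotone_nat_of_le_succ fun n ↦ Nat.div_le_div_right ?_
  have := hX n
  lia

lemma sub_add_div_two_add_three_le {X : ℕ → ℕ} {n : ℕ} (hX : X n + 1 ≤ X (n + 3)) (hle : X n ≤ n)
    (c : ℕ) : (n + 3 - X (n + 3) + c) / 2 ≤ (n - X n + c) / 2 + 1 := by
  lia

-- One letter follows the mechanical word and the other two share its zeros alternately.
lemma exists_coding_three_mul_add_one (l : ℕ) :
    ∃ x : ℕ → Fin 3, SmallestPeriod x (3 * l + 1) ∧ ∀ j n m,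
      ∑ i ∈ Finset.range m, letterIndicator x j (n + i) ≤ mechCount (l + 1) (3 * l + 1) m := by
  set k := 3 * l + 1 with hk
  have hk0 : 0 < k := by lia
  set X := mechCount (l + 1) k
  have hle : ∀ n, X n ≤ n := mechCount_le_self hk0 (by lia)
  have hone (n : ℕ) : X (n + 1) ≤ X n + 1 := mechCount_add_le_add_one hk0 (by lia) n
  have hthree (n : ℕ) : X n + 1 ≤ X (n + 3) := mechCount_add_one_le hk0 (by lia) n
  have hper (n : ℕ) : X (n + k) = X n + (l + 1) := mechCount_add_self hk0 n
  have hmono := monotone_sub_add_div_two hone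
  have hwindow (c : ℕ) := add_le_add_mechCount_of_slope_ge (p := l + 1) three_pos hk0 (by lia)
    (hmono c) fun n ↦ sub_add_div_two_add_three_le (hthree n) (hle n) c
  refine exists_smallestPeriod_coding_of_counts (M := ![l + 1, l, l]) (c := 1) hk0
    (C := ![X, fun n ↦ (n - X n + 1) / 2, fun n ↦ (n - X n + 0) / 2])
    (forall_fin_three.2 ⟨mechCount_mono hk0, hmono 1, hmono 0⟩) (fun n ↦ ?_)
    (forall_fin_three.2 ⟨hper, fun n ↦ ?_, fun n ↦ ?_⟩) (by simp [hk])
    (forall_fin_three.2 ⟨mechCount_add_le hk0, hwindow 1, hwindow 0⟩)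
  · have := hle n
    simp only [Fin.sum_univ_three, Matrix.cons_val]
    lia
  all_goals
    have := hle n
    have := hper n
    simp only [Matrix.cons_val]
    lia

lemma add_succ_le_succ {X : ℕ → ℕ} (h0 : X 0 + X 1 ≤ 1) (hX : ∀ n, X (n + 2) ≤ X n + 1) (n : ℕ) :
    X n + X (n + 1) ≤ n + 1 := by
  induction n with
  | zero => exact h0
  | succ n ih =>
    have := hX n
    lia

lemma monotone_succ_sub_sub {X : ℕ → ℕ} (hX : ∀ n, X (n + 2) ≤ X n + 1) :
    Monotone fun n ↦ n + 1 - X n - X (n + 1) :=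
  monotone_nat_of_le_succ fun n ↦ by
    have := hX n
    lia

lemma succ_sub_sub_add_three_le {X : ℕ → ℕ} {n : ℕ} (hX : ∀ n, X n + 1 ≤ X (n + 3))
    (hle : X n + X (n + 1) ≤ n + 1) :
    n + 3 + 1 - X (n + 3) - X (n + 3 + 1) ≤ n + 1 - X n - X (n + 1) + 1 := by
  have := hX n
  have := hX (n + 1)
  lia

-- Two letters follow shifts of the same mechanical word and the third takes what is left.
lemma exists_coding_three_mul_add_two (l : ℕ) :
    ∃ x : ℕ → Fin 3, SmallestPeriod x (3 * l + 2) ∧ ∀ j n m,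
      ∑ i ∈ Finset.range m, letterIndicator x j (n + i) ≤ mechCount (l + 1) (3 * l + 2) m := by
  set k := 3 * l + 2
  have hk0 : 0 < k := by lia
  set X := mechCount (l + 1) k with hX
  have hXmono : Monotone X := mechCount_mono hk0
  have hpos (n : ℕ) : 0 < X (n + 1) :=
    Nat.zero_lt_of_lt (div_lt_mechCount (d := 3) hk0 n.succ_pos (by lia))
  have htwo (n : ℕ) : X (n + 2) ≤ X n + 1 := mechCount_add_le_add_one hk0 (by lia) n
  have hthree (n : ℕ) : X n + 1 ≤ X (n + 3) := mechCount_add_one_le hk0 (by lia) n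
  have hper (n : ℕ) : X (n + k) = X n + (l + 1) := mechCount_add_self hk0 n
  have hle : ∀ n, X n + X (n + 1) ≤ n + 1 := add_succ_le_succ
    (by simpa [hX, mechCount_zero hk0] using mechCount_le_one hk0 (by lia)) htwo
  have hZmono := monotone_succ_sub_sub htwo
  have hZthree (n : ℕ) := succ_sub_sub_add_three_le hthree (hle n)
  have hcop : k.Coprime (l + 1) := by
    have : k = l + 1 + (l + (l + 1)) := by lia
    simp [this]
  refine exists_smallestPeriod_coding_of_counts (M := ![l + 1, l + 1, l]) (c := 0) hk0
    (C := ![X, fun n ↦ X (n + 1) - 1, fun n ↦ n + 1 - X n - X (n + 1)])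
    (forall_fin_three.2 ⟨hXmono, fun m n hmn ↦ ?_, hZmono⟩) (fun n ↦ ?_)
    (forall_fin_three.2 ⟨hper, fun n ↦ ?_, fun n ↦ ?_⟩) hcop
    (forall_fin_three.2 ⟨mechCount_add_le hk0, fun n m ↦ ?_,
      add_le_add_mechCount_of_slope_ge three_pos hk0 (by lia) hZmono hZthree⟩)
  · exact Nat.sub_le_sub_right (hXmono (Nat.add_le_add_right hmn 1)) 1
  · have := hle n
    have := hpos n
    simp only [Fin.sum_univ_three, Matrix.cons_val]
    lia
  · have := hper (n + 1)
    have := hpos n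
    simp only [Matrix.cons_val, add_right_comm n k 1]
    lia
  · have := hper n
    have := hper (n + 1)
    have := hle n
    simp only [Matrix.cons_val, add_right_comm n k 1]
    lia
  · have : X (n + 1 + m) ≤ X (n + 1) + mechCount (l + 1) k m := mechCount_add_le hk0 (n + 1) m
    have := hpos n
    simp only [Matrix.cons_val, add_right_comm n m 1]
    lia

end UpperBound

section CriticalBase

variable {l r : ℕ}

lemma exists_mem_Ufat_smallestPeriod_iff {β : ℝ} (hβ : β ∈ Ioc 1 2) (hk : 1 < 3 * l + r)
    (hr : r ∈ Icc 1 2) : (∃ d ∈ Ufat β, SmallestPeriod d (3 * l + r)) ↔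
      digitValue β (mechWord (l + 1) (3 * l + r)) < 1 := by
  obtain ⟨hr1, hr2⟩ := hr
  have hk0 : 0 < 3 * l + r := by lia
  constructor
  · rintro ⟨d, hd, hper⟩
    exact digitValue_mechWord_lt_one_of_mem_Ufat hβ hd hk hper (by lia)
  · intro hlt
    obtain ⟨x, hper, hx⟩ : ∃ x : ℕ → Fin 3, SmallestPeriod x (3 * l + r) ∧ ∀ j n m,
        ∑ i ∈ Finset.range m, letterIndicator x j (n + i) ≤ mechCount (l + 1) (3 * l + r) m := by
      obtain rfl | rfl : r = 1 ∨ r = 2 := by lia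
      exacts [exists_coding_three_mul_add_one l, exists_coding_three_mul_add_two l]
    refine ⟨vertex ∘ x, vertex_comp_mem_Ufat_of_sum_range_le hβ.1
      (isBinary_mechWord hk0 (by lia)) hlt fun j n m ↦ ?_,
      (smallestPeriod_comp_iff vertex_injective).2 hper⟩
    rw [sum_range_mechWord hk0]
    exact hx j n m

lemma betaK_mem_Ioo_and_digitValue_eq_one (hk : 1 < 3 * l + r) (hr : r ∈ Icc 1 2) :
    betaK (3 * l + r) ∈ Ioo 1 2 ∧
      digitValue (betaK (3 * l + r)) (mechWord (l + 1) (3 * l + r)) = 1 := by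
  have hk0 : 0 < 3 * l + r := by lia
  have hpk : l + 1 < 3 * l + r := by
    have := hr.1
    lia
  obtain ⟨γ, hγ, hroot⟩ := exists_digitValue_mechWord_eq_one l.succ_pos hpk
  have hset : {β : ℝ | β ∈ Ioc 1 2 ∧ ∃ d ∈ Ufat β, SmallestPeriod d (3 * l + r)} = Ioc γ 2 := by
    ext β
    have hanti := digitValue_strictAntiOn (isBinary_mechWord hk0 hpk.le)
      (mechWord_zero_ne_zero hk0 l.succ_pos)
    constructor
    · rintro ⟨hβ, hper⟩
      rw [exists_mem_Ufat_smallestPeriod_iff hβ hk hr, ← hroot] at hper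
      exact ⟨(hanti.lt_iff_gt hβ.1 hγ.1).1 hper, hβ.2⟩
    · intro hβ
      have hβ' : β ∈ Ioc 1 2 := ⟨hγ.1.trans hβ.1, hβ.2⟩
      refine ⟨hβ', (exists_mem_Ufat_smallestPeriod_iff hβ' hk hr).2 ?_⟩
      exact (hanti hγ.1 hβ'.1 hβ.1).trans_eq hroot
  rw [betaK, hset, csInf_Ioc hγ.2]
  exact ⟨hγ, hroot⟩

lemma strictAntiOn_betaK (hr : r ∈ Icc 1 2) :
    StrictAntiOn (fun l ↦ betaK (3 * l + r)) (Ici 1) := by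
  obtain ⟨hr1, hr2⟩ := hr
  intro l hl m hm hlm
  rw [mem_Ici] at hl hm
  obtain ⟨hβl, hl1⟩ := betaK_mem_Ioo_and_digitValue_eq_one (l := l) (by lia) ⟨hr1, hr2⟩
  obtain ⟨hβm, hm1⟩ := betaK_mem_Ioo_and_digitValue_eq_one (l := m) (by lia) ⟨hr1, hr2⟩
  have hk : 0 < 3 * m + r := by lia
  have hslope : (m + 1) * (3 * l + r) < (l + 1) * (3 * m + r) := by nlinarith
  have hlt := digitValue_mechWord_lt hβl.1 hk (by lia) (by lia) (by lia) hslope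
  rw [hl1, ← hm1] at hlt
  exact ((digitValue_strictAntiOn (isBinary_mechWord hk (by lia))
    (mechWord_zero_ne_zero hk m.succ_pos)).lt_iff_gt hβl.1 hβm.1).1 hlt

lemma tendsto_betaK {β : ℝ} (hβ : 1 < β) (hroot : digitValue β limitWord = 1) (hr : r ∈ Icc 1 2) :
    Tendsto (fun l ↦ betaK (3 * l + r)) atTop (𝓝 β) := by
  obtain ⟨hr1, hr2⟩ := hr
  have hanti := digitValue_strictAntiOn isBinary_limitWord (n := 0) (by simp [limitWord_apply])
  refine tendsto_order.2 ⟨fun y hy ↦ ?_, fun y hy ↦ ?_⟩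
  · filter_upwards [eventually_ge_atTop 1] with l hl
    obtain ⟨hβl, hl1⟩ := betaK_mem_Ioo_and_digitValue_eq_one (l := l) (by lia) ⟨hr1, hr2⟩
    have hle := digitValue_limitWord_le hβl.1 (p := l + 1) (q := 3 * l + r) (by lia) (by lia)
    rw [hl1, ← hroot] at hle
    exact hy.trans_le ((hanti.le_iff_ge hβl.1 hβ).1 hle)
  · have hy1 : 1 < y := hβ.trans hy
    have hlim := tendsto_digitValue hy1
      (.of_forall fun l ↦ isBinary_mechWord (p := l + 1) (q := 3 * l + r) (by lia) (by lia))
      (eventually_mechWord_eq_limitWord ⟨hr1, hr2⟩)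
    have hlt : digitValue y limitWord < 1 := (hanti hβ hy1 hy).trans_eq hroot
    filter_upwards [hlim.eventually_lt_const hlt, eventually_ge_atTop 1] with l hyl hl
    obtain ⟨hβl, hl1⟩ := betaK_mem_Ioo_and_digitValue_eq_one (l := l) (by lia) ⟨hr1, hr2⟩
    rw [← hl1] at hyl
    exact ((digitValue_strictAntiOn (isBinary_mechWord (by lia) (by lia))
      (mechWord_zero_ne_zero (by lia) l.succ_pos)).lt_iff_gt hy1 hβl.1).1 hyl

end CriticalBase

/-- The sequences ℓ ↦ β_{3ℓ+1} and ℓ ↦ β_{3ℓ+2} (ℓ ≥ 1) are strictly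
decreasing and both converge to the base β_a ∈ (1,2] whose quasi-greedy
expansion of 1 is 101(001)^∞. -/
theorem stmt11 (ba : ℝ) (hba : ba ∈ Set.Ioc (1 : ℝ) 2)
    (hqg : FatSierpinski.IsQuasiGreedy ba
      (FatSierpinski.prefixPeriodic [1, 0, 1] [0, 0, 1])) :
    StrictAntiOn (fun l : ℕ => FatSierpinski.betaK (3 * l + 1)) (Set.Ici 1) ∧
    StrictAntiOn (fun l : ℕ => FatSierpinski.betaK (3 * l + 2)) (Set.Ici 1) ∧
    Filter.Tendsto (fun l : ℕ => FatSierpinski.betaK (3 * l + 1))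
      Filter.atTop (nhds ba) ∧
    Filter.Tendsto (fun l : ℕ => FatSierpinski.betaK (3 * l + 2))
      Filter.atTop (nhds ba) := by
  have hr1 : 1 ∈ Icc 1 2 := by decide
  have hr2 : 2 ∈ Icc 1 2 := by decide
  have hroot : digitValue ba limitWord = 1 := hqg.2.2.1
  exact ⟨strictAntiOn_betaK hr1, strictAntiOn_betaK hr2, tendsto_betaK hba.1 hroot hr1,
    tendsto_betaK hba.1 hroot hr2⟩

end FatSierpinski
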